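/- Under Assumption (Lip), for any ε > 0 there exists M' ∈ ℕ such that for all M > M', any solution (𝛑, 𝛍) of the M equivalence classes method (𝛑 block-constant with π^α = π^{α_m} optimal for J^𝛍_{α_m} on Ĩ_m, and 𝛍 = Ψ̂(𝛑)) satisfies sup_{α∈[0,1]} max_{π∈Π} ( J^{𝛍̄}_α(π) − J^{𝛍̄}_α(π^α) ) < ε, where 𝛍̄ = Ψ(𝛑) is the exact mean field ensemble generated by the block-constant policy ensemble 𝛑. -/

import Mathlib

open MeasureTheory Filter
open scoped BigOperators

namespace GMFG

variable {𝒳 𝒰 : Type*}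

/-- The probability simplex 𝒫(𝒳) on a finite set, as probability mass functions. -/
def simplex (𝒳 : Type*) [Fintype 𝒳] : Set (𝒳 → ℝ) :=
  {p | (∀ x, 0 ≤ p x) ∧ ∑ x, p x = 1}

/-- The set ℬ₁(𝒳) of (sub-probability) measures with total mass at most 1,
as mass functions. -/
def subProb (𝒳 : Type*) [Fintype 𝒳] : Set (𝒳 → ℝ) :=
  {p | (∀ x, 0 ≤ p x) ∧ ∑ x, p x ≤ 1}

/-- L¹ distance between measures on a finite set. -/
noncomputable def l1dist [Fintype 𝒳] (ν ν' : 𝒳 → ℝ) : ℝ := ∑ x, |ν x - ν' x|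

/-- Markovian feedback policies π ∈ Π = 𝒫(𝒰)^{𝒯×𝒳}. -/
def IsPolicy [Fintype 𝒰] (π : ℕ → 𝒳 → 𝒰 → ℝ) : Prop :=
  ∀ t x, (∀ u, 0 ≤ π t x u) ∧ ∑ u, π t x u = 1

/-- P : 𝒳×𝒰×ℬ₁(𝒳) → 𝒫(𝒳) is a transition kernel. -/
def IsKernel [Fintype 𝒳] [Fintype 𝒰] (P : 𝒳 → 𝒰 → (𝒳 → ℝ) → 𝒳 → ℝ) : Prop :=
  ∀ x u ν, ν ∈ subProb 𝒳 → P x u ν ∈ simplex 𝒳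

/-- Lipschitz continuity of the transition kernel w.r.t. the L¹ norm. -/
def KernelLipschitz [Fintype 𝒳] [Fintype 𝒰] (P : 𝒳 → 𝒰 → (𝒳 → ℝ) → 𝒳 → ℝ) (L : ℝ) : Prop :=
  ∀ x u ν ν', ν ∈ subProb 𝒳 → ν' ∈ subProb 𝒳 → l1dist (P x u ν) (P x u ν') ≤ L * l1dist ν ν'

/-- Lipschitz continuity of the reward w.r.t. the L¹ norm. -/
def RewardLipschitz [Fintype 𝒳] [Fintype 𝒰] (r : 𝒳 → 𝒰 → (𝒳 → ℝ) → ℝ) (L : ℝ) : Prop :=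
  ∀ x u ν ν', ν ∈ subProb 𝒳 → ν' ∈ subProb 𝒳 → |r x u ν - r x u ν'| ≤ L * l1dist ν ν'

/-- A graphon: symmetric, measurable, [0,1]-valued. -/
def IsGraphon (W : ℝ → ℝ → ℝ) : Prop :=
  Measurable (Function.uncurry W) ∧ (∀ a b, W a b = W b a) ∧ ∀ a b, W a b ∈ Set.Icc (0:ℝ) 1

/-- Lipschitz continuity of a graphon on [0,1]². -/
def GraphonLipschitz (W : ℝ → ℝ → ℝ) (L : ℝ) : Prop :=
  ∀ a b a' b' : ℝ, a ∈ Set.Icc (0:ℝ) 1 → b ∈ Set.Icc (0:ℝ) 1 → a' ∈ Set.Icc (0:ℝ) 1 →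
    b' ∈ Set.Icc (0:ℝ) 1 → |W a b - W a' b'| ≤ L * (|a - a'| + |b - b'|)

/-- The neighborhood mean field 𝔾^α = ∫₀¹ W(α,β) ν^β dβ of a state marginal ensemble ν. -/
noncomputable def nbhd [Fintype 𝒳] (W : ℝ → ℝ → ℝ) (ν : ℝ → 𝒳 → ℝ) (α : ℝ) : 𝒳 → ℝ :=
  fun x => ∫ β in Set.Ioc (0:ℝ) 1, W α β * ν β x

/-- 𝛍 = Ψ(𝛑): the (measurable) mean field ensemble generated by the policy ensemble 𝛑,
via μ^α_0 = μ₀ and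
μ^α_{t+1}(x') = Σ_{x,u} μ^α_t(x) π^α_t(u|x) P(x'|x,u,𝔾^α_t). -/
def IsMeanFieldOf [Fintype 𝒳] [Fintype 𝒰] (W : ℝ → ℝ → ℝ) (P : 𝒳 → 𝒰 → (𝒳 → ℝ) → 𝒳 → ℝ)
    (μ0 : 𝒳 → ℝ) (πe : ℝ → ℕ → 𝒳 → 𝒰 → ℝ) (μ : ℕ → ℝ → 𝒳 → ℝ) : Prop :=
  (∀ t x, Measurable fun α => μ t α x) ∧
  (∀ α ∈ Set.Icc (0:ℝ) 1, μ 0 α = μ0) ∧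
  ∀ t : ℕ, ∀ α ∈ Set.Icc (0:ℝ) 1, ∀ x' : 𝒳,
    μ (t+1) α x' = ∑ x, μ t α x * ∑ u, πe α t x u * P x u (nbhd W (μ t) α) x'

/-- The law of the state of a single mean field agent with neighborhood mean field
G and policy π: X_0 ∼ μ₀, U_t ∼ π_t(·|X_t), X_{t+1} ∼ P(·|X_t,U_t,G_t). -/
noncomputable def stateLaw [Fintype 𝒳] [Fintype 𝒰] (P : 𝒳 → 𝒰 → (𝒳 → ℝ) → 𝒳 → ℝ)
    (μ0 : 𝒳 → ℝ) (G : ℕ → 𝒳 → ℝ) (π : ℕ → 𝒳 → 𝒰 → ℝ) : ℕ → 𝒳 → ℝ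
  | 0 => μ0
  | (t+1) => fun x' => ∑ x, stateLaw P μ0 G π t x * ∑ u, π t x u * P x u (G t) x'

/-- Mean field objective J(π) = E[Σ_{t<T} r(X_t,U_t,G_t)] of a single agent whose
neighborhood mean field is G. -/
noncomputable def Jmf [Fintype 𝒳] [Fintype 𝒰] (T : ℕ) (r : 𝒳 → 𝒰 → (𝒳 → ℝ) → ℝ)
    (P : 𝒳 → 𝒰 → (𝒳 → ℝ) → 𝒳 → ℝ) (μ0 : 𝒳 → ℝ) (G : ℕ → 𝒳 → ℝ) (π : ℕ → 𝒳 → 𝒰 → ℝ) : ℝ :=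
  ∑ t ∈ Finset.range T, ∑ x, stateLaw P μ0 G π t x * ∑ u, π t x u * r x u (G t)

/-- A Graphon Mean Field Equilibrium: a measurable policy ensemble 𝛑 and mean field
ensemble 𝛍 with 𝛍 = Ψ(𝛑) and π^α optimal for J^𝛍_α for every α ∈ [0,1]. -/
def IsGMFE [Fintype 𝒳] [Fintype 𝒰] (T : ℕ) (W : ℝ → ℝ → ℝ) (P : 𝒳 → 𝒰 → (𝒳 → ℝ) → 𝒳 → ℝ)
    (r : 𝒳 → 𝒰 → (𝒳 → ℝ) → ℝ) (μ0 : 𝒳 → ℝ)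
    (πe : ℝ → ℕ → 𝒳 → 𝒰 → ℝ) (μ : ℕ → ℝ → 𝒳 → ℝ) : Prop :=
  (∀ t x u, Measurable fun α => πe α t x u) ∧
  (∀ α ∈ Set.Icc (0:ℝ) 1, IsPolicy (πe α)) ∧
  IsMeanFieldOf W P μ0 πe μ ∧
  ∀ α ∈ Set.Icc (0:ℝ) 1, ∀ π' : ℕ → 𝒳 → 𝒰 → ℝ, IsPolicy π' →
    Jmf T r P μ0 (fun t => nbhd W (μ t) α) π' ≤ Jmf T r P μ0 (fun t => nbhd W (μ t) α) (πe α)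

/-- α ↦ π^α is Lipschitz continuous up to a finite set D of discontinuities. -/
def EnsembleLipschitzUpTo [Fintype 𝒳] [Fintype 𝒰] (πe : ℝ → ℕ → 𝒳 → 𝒰 → ℝ) : Prop :=
  ∃ (L : ℝ) (D : Finset ℝ), ∀ (t : ℕ) (x : 𝒳) (u : 𝒰),
    ∀ α ∈ Set.Icc (0:ℝ) 1, ∀ β ∈ Set.Icc (0:ℝ) 1,
      (∀ d ∈ D, d ∉ Set.uIcc α β) → |πe α t x u - πe β t x u| ≤ L * |α - β|

/-- Edge indicators of a simple (undirected) graph. -/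
def IsEdgeWeights {N : ℕ} (ξ : Fin N → Fin N → ℝ) : Prop :=
  (∀ i j, ξ i j = 0 ∨ ξ i j = 1) ∧ ∀ i j, ξ i j = ξ j i

/-- Empirical neighborhood mean field 𝔾ⁱ = (1/N) Σ_j ξ_{ij} δ_{X^j}. -/
noncomputable def empNbhd [Fintype 𝒳] [DecidableEq 𝒳] {N : ℕ} (ξ : Fin N → Fin N → ℝ)
    (X : Fin N → 𝒳) (i : Fin N) : 𝒳 → ℝ :=
  fun x => (N : ℝ)⁻¹ * ∑ j, ξ i j * (if X j = x then 1 else 0)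

/-- The joint law of the N agents' states at time t: X^i_0 ∼ μ₀ i.i.d.,
U^i_t ∼ π^i_t(·|X^i_t), X^i_{t+1} ∼ P(·|X^i_t,U^i_t,𝔾^i_t) conditionally independently. -/
noncomputable def jointLaw [Fintype 𝒳] [DecidableEq 𝒳] [Fintype 𝒰] {N : ℕ}
    (P : 𝒳 → 𝒰 → (𝒳 → ℝ) → 𝒳 → ℝ) (μ0 : 𝒳 → ℝ) (ξ : Fin N → Fin N → ℝ)
    (πs : Fin N → ℕ → 𝒳 → 𝒰 → ℝ) : ℕ → (Fin N → 𝒳) → ℝ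
  | 0 => fun X => ∏ i, μ0 (X i)
  | (t+1) => fun Y => ∑ X : Fin N → 𝒳, jointLaw P μ0 ξ πs t X *
      ∏ i, ∑ u, πs i t (X i) u * P (X i) u (empNbhd ξ X i) (Y i)

/-- The objective J^N_i = E[Σ_{t<T} r(X^i_t,U^i_t,𝔾^i_t)] of agent i in the N-agent game. -/
noncomputable def JN [Fintype 𝒳] [DecidableEq 𝒳] [Fintype 𝒰] {N : ℕ} (T : ℕ)
    (r : 𝒳 → 𝒰 → (𝒳 → ℝ) → ℝ) (P : 𝒳 → 𝒰 → (𝒳 → ℝ) → 𝒳 → ℝ) (μ0 : 𝒳 → ℝ)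
    (ξ : Fin N → Fin N → ℝ) (πs : Fin N → ℕ → 𝒳 → 𝒰 → ℝ) (i : Fin N) : ℝ :=
  ∑ t ∈ Finset.range T, ∑ X : Fin N → 𝒳, jointLaw P μ0 ξ πs t X *
    ∑ u, πs i t (X i) u * r (X i) u (empNbhd ξ X i)

/-- Γ_N(𝛑) = (π^{1/N},…,π^{N/N}) (agent i : Fin N has graphon index (i+1)/N). -/
noncomputable def gammaN (πe : ℝ → ℕ → 𝒳 → 𝒰 → ℝ) (N : ℕ) : Fin N → ℕ → 𝒳 → 𝒰 → ℝ :=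
  fun i => πe ((((i : ℕ) : ℝ) + 1) / N)

/-- The step graphon W_N of a finite graph: W_N(x,y) = ξ_{⌈Nx⌉,⌈Ny⌉}. -/
noncomputable def stepGraphon {N : ℕ} (ξ : Fin N → Fin N → ℝ) : ℝ → ℝ → ℝ := fun a b =>
  ∑ i : Fin N, ∑ j : Fin N,
    (if ((i : ℕ) : ℝ) / N < a ∧ a ≤ (((i : ℕ) : ℝ) + 1) / N then 1 else 0) *
    (if ((j : ℕ) : ℝ) / N < b ∧ b ≤ (((j : ℕ) : ℝ) + 1) / N then 1 else 0) * ξ i j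

/-- Assumption (W): ‖W_N − W‖_{L∞→L1} → 0, i.e.
sup_{‖g‖∞ ≤ 1} ∫₀¹ |∫₀¹ (W_N(α,β) − W(α,β)) g(β) dβ| dα → 0. -/
def OpConvergesTo (WN : (N : ℕ) → ℝ → ℝ → ℝ) (W : ℝ → ℝ → ℝ) : Prop :=
  ∀ ε > (0:ℝ), ∃ N₀ : ℕ, ∀ N ≥ N₀, ∀ g : ℝ → ℝ, Measurable g → (∀ β, |g β| ≤ 1) →
    (∫ α in Set.Ioc (0:ℝ) 1, |∫ β in Set.Ioc (0:ℝ) 1, (WN N α β - W α β) * g β|) ≤ ε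

/-- ‖W_N − W‖_{L∞→L1} = O(1/√N). -/
def OpRateSqrt (WN : (N : ℕ) → ℝ → ℝ → ℝ) (W : ℝ → ℝ → ℝ) : Prop :=
  ∃ C : ℝ, ∀ N : ℕ, 1 ≤ N → ∀ g : ℝ → ℝ, Measurable g → (∀ β, |g β| ≤ 1) →
    (∫ α in Set.Ioc (0:ℝ) 1, |∫ β in Set.Ioc (0:ℝ) 1, (WN N α β - W α β) * g β|) ≤ C / Real.sqrt N

/-- 𝛍^N_t(f) = ∫₀¹ f(X^{⌈Nα⌉}, α) dα, the integral of f against the random empirical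
step measure ensemble. -/
noncomputable def empInt [Fintype 𝒳] {N : ℕ} (f : 𝒳 → ℝ → ℝ) (X : Fin N → 𝒳) : ℝ :=
  ∑ i : Fin N, ∫ α in Set.Ioc (((i : ℕ) : ℝ) / N) ((((i : ℕ) : ℝ) + 1) / N), f (X i) α

/-- 𝛍_t(f) = ∫₀¹ Σ_x f(x,α) μ^α_t(x) dα. -/
noncomputable def mfInt [Fintype 𝒳] (f : 𝒳 → ℝ → ℝ) (ν : ℝ → 𝒳 → ℝ) : ℝ :=
  ∫ α in Set.Ioc (0:ℝ) 1, ∑ x, f x α * ν α x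

/-- The representative α_m = (m+1)/M of the m-th equivalence class Ĩ_m = (m/M,(m+1)/M]. -/
noncomputable def rep (M : ℕ) (m : Fin M) : ℝ := (((m : ℕ) : ℝ) + 1) / M

/-- Discretized neighborhood mean field 𝔾̂^{α_m} = (1/M) Σ_n W(α_m,α_n) ν^{α_n}. -/
noncomputable def approxNbhd [Fintype 𝒳] {M : ℕ} (W : ℝ → ℝ → ℝ) (ν : Fin M → 𝒳 → ℝ)
    (m : Fin M) : 𝒳 → ℝ :=
  fun x => (M : ℝ)⁻¹ * ∑ n, W (rep M m) (rep M n) * ν n x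

/-- The approximate mean field μ̂ = Ψ̂(𝛑) of the M equivalence classes method. -/
noncomputable def approxMF [Fintype 𝒳] [Fintype 𝒰] {M : ℕ} (W : ℝ → ℝ → ℝ)
    (P : 𝒳 → 𝒰 → (𝒳 → ℝ) → 𝒳 → ℝ) (μ0 : 𝒳 → ℝ) (πm : Fin M → ℕ → 𝒳 → 𝒰 → ℝ) :
    ℕ → Fin M → 𝒳 → ℝ
  | 0 => fun _ => μ0
  | (t+1) => fun m x' => ∑ x, approxMF W P μ0 πm t m x *
      ∑ u, πm m t x u * P x u (approxNbhd W (approxMF W P μ0 πm t) m) x'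

/-- A solution (𝛑, 𝛍) of the M equivalence classes method: 𝛑 is determined by policies
π^{α_m} (one per class), each optimal for the generated approximate mean field 𝛍 = Ψ̂(𝛑). -/
def IsEqClassSolution [Fintype 𝒳] [Fintype 𝒰] (T : ℕ) {M : ℕ} (W : ℝ → ℝ → ℝ)
    (P : 𝒳 → 𝒰 → (𝒳 → ℝ) → 𝒳 → ℝ) (r : 𝒳 → 𝒰 → (𝒳 → ℝ) → ℝ) (μ0 : 𝒳 → ℝ)
    (πm : Fin M → ℕ → 𝒳 → 𝒰 → ℝ) : Prop :=
  (∀ m, IsPolicy (πm m)) ∧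
  ∀ m, ∀ π' : ℕ → 𝒳 → 𝒰 → ℝ, IsPolicy π' →
    Jmf T r P μ0 (fun t => approxNbhd W (approxMF W P μ0 πm t) m) π'
      ≤ Jmf T r P μ0 (fun t => approxNbhd W (approxMF W P μ0 πm t) m) (πm m)

/-- The optimal action value function Q with k steps to go from time t,
Q(t,x,u) = r(x,u,G_t) + Σ_{x'} P(x'|x,u,G_t) max_{u'} Q(t+1,x',u'). -/
noncomputable def Qfun [Fintype 𝒳] [Fintype 𝒰] [Nonempty 𝒰] (r : 𝒳 → 𝒰 → (𝒳 → ℝ) → ℝ)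
    (P : 𝒳 → 𝒰 → (𝒳 → ℝ) → 𝒳 → ℝ) (G : ℕ → 𝒳 → ℝ) : ℕ → ℕ → 𝒳 → 𝒰 → ℝ
  | 0 => fun _ _ _ => 0
  | (k+1) => fun t x u => r x u (G t) + ∑ x', P x u (G t) x' *
      Finset.univ.sup' Finset.univ_nonempty (fun u' => Qfun r P G k (t+1) x' u')

/-- The Boltzmann (softmax) policy Φ̂_η(𝛍) of the M equivalence classes method with
horizon T, temperature η and block mean field ν. -/
noncomputable def boltzmann [Fintype 𝒳] [Fintype 𝒰] [Nonempty 𝒰] (T : ℕ) (η : ℝ)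
    (r : 𝒳 → 𝒰 → (𝒳 → ℝ) → ℝ) (P : 𝒳 → 𝒰 → (𝒳 → ℝ) → 𝒳 → ℝ) (W : ℝ → ℝ → ℝ) {M : ℕ}
    (ν : ℕ → Fin M → 𝒳 → ℝ) : Fin M → ℕ → 𝒳 → 𝒰 → ℝ :=
  fun m t x u =>
    Real.exp (Qfun r P (fun s => approxNbhd W (ν s) m) (T - t) t x u / η) /
      ∑ u' : 𝒰, Real.exp (Qfun r P (fun s => approxNbhd W (ν s) m) (T - t) t x u' / η)

/-- One step 𝛍 ↦ Ψ̂(Φ̂_η(𝛍)) of the Boltzmann fixed point iteration. -/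
noncomputable def boltzIter [Fintype 𝒳] [Fintype 𝒰] [Nonempty 𝒰] (T : ℕ) (η : ℝ)
    (r : 𝒳 → 𝒰 → (𝒳 → ℝ) → ℝ) (P : 𝒳 → 𝒰 → (𝒳 → ℝ) → 𝒳 → ℝ) (W : ℝ → ℝ → ℝ) (μ0 : 𝒳 → ℝ)
    {M : ℕ} (ν : ℕ → Fin M → 𝒳 → ℝ) : ℕ → Fin M → 𝒳 → ℝ :=
  fun t => approxMF W P μ0 (boltzmann T η r P W ν) t

/-!
Agents of one class use the same policy in the exact and in the approximate system, so the two
systems only differ through their neighborhood mean fields. Replacing `∫₀¹ W(α,β) ν^β dβ` by its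
Riemann sum costs `c = 2 L_W / M` plus the distance of the state marginals, and these move apart in
one step by at most `L_P` times the distance of the neighborhood mean fields. By a discrete
Grönwall argument the neighborhood mean fields stay within `c (1 + L_P)^t`. The objective is
Lipschitz in the neighborhood mean field uniformly in the policy, so a policy that is optimal for
the approximate system is `O(1/M)`-optimal for the exact one.
-/

section FiniteMeasures

open Matrix

variable {ι κ : Type*} [Fintype ι] [Fintype κ]

lemma l1dist_nonneg (p q : ι → ℝ) : 0 ≤ l1dist p q :=
  Finset.sum_nonneg fun _ _ => abs_nonneg _

lemma l1dist_self (p : ι → ℝ) : l1dist p p = 0 := by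
  simp [l1dist]

lemma l1dist_eq_norm_toLp_sub (p q : ι → ℝ) : l1dist p q = ‖WithLp.toLp 1 (p - q)‖ := by
  simp only [PiLp.norm_eq_of_L1, l1dist, Pi.sub_apply, Real.norm_eq_abs]

lemma zero_mem_subProb : (0 : ι → ℝ) ∈ subProb ι :=
  ⟨fun _ => le_rfl, by simp⟩

lemma l1dist_zero_le_one {p : ι → ℝ} (hp : p ∈ subProb ι) : l1dist p 0 ≤ 1 := by
  simpa only [l1dist, Pi.zero_apply, sub_zero, abs_of_nonneg (hp.1 _)] using hp.2

lemma le_one_of_mem_simplex {p : ι → ℝ} (hp : p ∈ simplex ι) (i : ι) : p i ≤ 1 :=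
  hp.2 ▸ Finset.single_le_sum (fun j _ => hp.1 j) (Finset.mem_univ i)

lemma l1dist_mul_le {a b : ℝ} (ha : a ∈ Set.Icc (0 : ℝ) 1) {p q : ι → ℝ} (hq : q ∈ simplex ι) :
    l1dist (fun i => a * p i) (fun i => b * q i) ≤ |a - b| + l1dist p q := by
  calc l1dist (fun i => a * p i) (fun i => b * q i)
      ≤ ∑ i, (|a - b| * q i + |p i - q i|) := by
        refine Finset.sum_le_sum fun i _ => ?_
        calc |a * p i - b * q i| = |(a - b) * q i + a * (p i - q i)| := by ring_nf
          _ ≤ |(a - b) * q i| + |a * (p i - q i)| := abs_add_le _ _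
          _ = |a - b| * q i + a * |p i - q i| := by
            rw [abs_mul, abs_mul, abs_of_nonneg (hq.1 i), abs_of_nonneg ha.1]
          _ ≤ |a - b| * q i + |p i - q i| := by
            gcongr
            exact mul_le_of_le_one_left (abs_nonneg _) ha.2
    _ = |a - b| + l1dist p q := by
        rw [Finset.sum_add_distrib, ← Finset.mul_sum, hq.2, mul_one, l1dist]

lemma abs_dotProduct_le_mul_sum_abs (v : ι → ℝ) {f : ι → ℝ} {R : ℝ} (hf : ∀ i, |f i| ≤ R) :
    |v ⬝ᵥ f| ≤ R * ∑ i, |v i| := by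
  rw [Finset.mul_sum]
  refine (Finset.abs_sum_le_sum_abs _ _).trans (Finset.sum_le_sum fun i _ => ?_)
  rw [abs_mul, mul_comm]
  exact mul_le_mul_of_nonneg_right (hf i) (abs_nonneg _)

lemma abs_dotProduct_le_of_mem_simplex {p : ι → ℝ} (hp : p ∈ simplex ι) {f : ι → ℝ} {R : ℝ}
    (hf : ∀ i, |f i| ≤ R) : |p ⬝ᵥ f| ≤ R := by
  simpa only [abs_of_nonneg (hp.1 _), hp.2, mul_one] using abs_dotProduct_le_mul_sum_abs p hf

lemma abs_dotProduct_sub_dotProduct_le {p q : ι → ℝ} (hq : q ∈ simplex ι) {f g : ι → ℝ} {R c : ℝ}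
    (hf : ∀ i, |f i| ≤ R) (hfg : ∀ i, |f i - g i| ≤ c) :
    |p ⬝ᵥ f - q ⬝ᵥ g| ≤ R * l1dist p q + c := by
  calc |p ⬝ᵥ f - q ⬝ᵥ g| = |(p - q) ⬝ᵥ f + q ⬝ᵥ (f - g)| := by
        rw [sub_dotProduct, dotProduct_sub, sub_add_sub_cancel]
    _ ≤ |(p - q) ⬝ᵥ f| + |q ⬝ᵥ (f - g)| := abs_add_le _ _
    _ ≤ R * l1dist p q + c :=
        add_le_add (abs_dotProduct_le_mul_sum_abs _ hf) (abs_dotProduct_le_of_mem_simplex hq hfg)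

/-- The law of `y` when `x ∼ p` and `y ∼ A x`, for mass functions on finite sets. -/
def mixture (p : ι → ℝ) (A : ι → κ → ℝ) : κ → ℝ :=
  fun y => ∑ x, p x * A x y

lemma mixture_mem_simplex {p : ι → ℝ} (hp : p ∈ simplex ι) {A : ι → κ → ℝ}
    (hA : ∀ x, A x ∈ simplex κ) : mixture p A ∈ simplex κ := by
  refine ⟨fun y => Finset.sum_nonneg fun x _ => mul_nonneg (hp.1 x) ((hA x).1 y), ?_⟩
  simp only [mixture]
  rw [Finset.sum_comm]
  simp only [← Finset.mul_sum, (hA _).2, mul_one, hp.2]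

lemma l1dist_mixture_le {p q : ι → ℝ} (hq : q ∈ simplex ι) {A B : ι → κ → ℝ}
    (hA : ∀ x, A x ∈ simplex κ) {c : ℝ} (hAB : ∀ x, l1dist (A x) (B x) ≤ c) :
    l1dist (mixture p A) (mixture q B) ≤ l1dist p q + c := by
  have pointwise (y : κ) : |mixture p A y - mixture q B y| ≤
      ∑ x, (|p x - q x| * A x y + q x * |A x y - B x y|) := by
    simp only [mixture]
    rw [← Finset.sum_sub_distrib]
    refine (Finset.abs_sum_le_sum_abs _ _).trans (Finset.sum_le_sum fun x _ => ?_)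
    calc |p x * A x y - q x * B x y| = |(p x - q x) * A x y + q x * (A x y - B x y)| := by
          ring_nf
      _ ≤ |(p x - q x) * A x y| + |q x * (A x y - B x y)| := abs_add_le _ _
      _ = |p x - q x| * A x y + q x * |A x y - B x y| := by
          rw [abs_mul, abs_mul, abs_of_nonneg ((hA x).1 y), abs_of_nonneg (hq.1 x)]
  calc l1dist (mixture p A) (mixture q B)
      ≤ ∑ y, ∑ x, (|p x - q x| * A x y + q x * |A x y - B x y|) :=
        Finset.sum_le_sum fun y _ => pointwise y
    _ = ∑ x, (|p x - q x| + q x * l1dist (A x) (B x)) := by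
        rw [Finset.sum_comm]
        simp only [Finset.sum_add_distrib, ← Finset.mul_sum, (hA _).2, mul_one, l1dist]
    _ ≤ ∑ x, (|p x - q x| + q x * c) := by
        gcongr with x
        exacts [hq.1 x, hAB x]
    _ = l1dist p q + c := by
        rw [Finset.sum_add_distrib, ← Finset.sum_mul, hq.2, one_mul, l1dist]

end FiniteMeasures

section Agent

open Matrix

variable [Fintype 𝒳] [Fintype 𝒰] {P : 𝒳 → 𝒰 → (𝒳 → ℝ) → 𝒳 → ℝ} {r : 𝒳 → 𝒰 → (𝒳 → ℝ) → ℝ}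
  {μ0 : 𝒳 → ℝ} {L Lr : ℝ}

lemma KernelLipschitz.mono {L' : ℝ} (hP : KernelLipschitz P L) (h : L ≤ L') :
    KernelLipschitz P L' := fun x u ν ν' hν hν' =>
  (hP x u ν ν' hν hν').trans (mul_le_mul_of_nonneg_right h (l1dist_nonneg _ _))

lemma RewardLipschitz.mono {L' : ℝ} (hr : RewardLipschitz r L) (h : L ≤ L') :
    RewardLipschitz r L' := fun x u ν ν' hν hν' =>
  (hr x u ν ν' hν hν').trans (mul_le_mul_of_nonneg_right h (l1dist_nonneg _ _))

lemma RewardLipschitz.exists_bound (hr : RewardLipschitz r Lr) (hLr : 0 ≤ Lr) :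
    ∃ R : ℝ, ∀ x u, ∀ ν ∈ subProb 𝒳, |r x u ν| ≤ R := by
  obtain ⟨B, hB⟩ := Finite.exists_le fun xu : 𝒳 × 𝒰 => |r xu.1 xu.2 0|
  refine ⟨Lr + B, fun x u ν hν => ?_⟩
  calc |r x u ν| = |(r x u ν - r x u 0) + r x u 0| := by rw [sub_add_cancel]
    _ ≤ |r x u ν - r x u 0| + |r x u 0| := abs_add_le _ _
    _ ≤ Lr * l1dist ν 0 + B := add_le_add (hr x u ν 0 hν zero_mem_subProb) (hB (x, u))
    _ ≤ Lr + B := by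
        gcongr
        exact mul_le_of_le_one_right hLr (l1dist_zero_le_one hν)

/-- The state transition kernel of an agent that draws its action from `π · | x` and whose
neighborhood mean field is `G`. -/
def policyKernel (P : 𝒳 → 𝒰 → (𝒳 → ℝ) → 𝒳 → ℝ) (π : 𝒳 → 𝒰 → ℝ) (G : 𝒳 → ℝ) : 𝒳 → 𝒳 → ℝ :=
  fun x => mixture (π x) fun u => P x u G

lemma policyKernel_mem_simplex (hP : IsKernel P) {π : 𝒳 → 𝒰 → ℝ} (hπ : ∀ x, π x ∈ simplex 𝒰)
    {G : 𝒳 → ℝ} (hG : G ∈ subProb 𝒳) (x : 𝒳) : policyKernel P π G x ∈ simplex 𝒳 :=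
  mixture_mem_simplex (hπ x) fun u => hP x u G hG

lemma l1dist_policyKernel_le (hP : IsKernel P) (hPLip : KernelLipschitz P L) {π : 𝒳 → 𝒰 → ℝ}
    (hπ : ∀ x, π x ∈ simplex 𝒰) {G G' : 𝒳 → ℝ} (hG : G ∈ subProb 𝒳) (hG' : G' ∈ subProb 𝒳)
    (x : 𝒳) : l1dist (policyKernel P π G x) (policyKernel P π G' x) ≤ L * l1dist G G' := by
  simpa only [policyKernel, l1dist_self, zero_add] using
    l1dist_mixture_le (p := π x) (hπ x) (fun u => hP x u G hG) fun u => hPLip x u G G' hG hG'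

lemma l1dist_mixture_policyKernel_le (hP : IsKernel P) (hPLip : KernelLipschitz P L)
    {π : 𝒳 → 𝒰 → ℝ} (hπ : ∀ x, π x ∈ simplex 𝒰) {G G' : 𝒳 → ℝ} (hG : G ∈ subProb 𝒳)
    (hG' : G' ∈ subProb 𝒳) {p q : 𝒳 → ℝ} (hq : q ∈ simplex 𝒳) :
    l1dist (mixture p (policyKernel P π G)) (mixture q (policyKernel P π G')) ≤
      l1dist p q + L * l1dist G G' :=
  l1dist_mixture_le hq (policyKernel_mem_simplex hP hπ hG)
    (l1dist_policyKernel_le hP hPLip hπ hG hG')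

lemma stateLaw_mem_simplex (hP : IsKernel P) (hμ0 : μ0 ∈ simplex 𝒳) {π : ℕ → 𝒳 → 𝒰 → ℝ}
    (hπ : IsPolicy π) {G : ℕ → 𝒳 → ℝ} (hG : ∀ t, G t ∈ subProb 𝒳) (t : ℕ) :
    stateLaw P μ0 G π t ∈ simplex 𝒳 := by
  induction t with
  | zero => exact hμ0
  | succ t ih => exact mixture_mem_simplex ih (policyKernel_mem_simplex hP (hπ t) (hG t))

lemma l1dist_stateLaw_le (hP : IsKernel P) (hPLip : KernelLipschitz P L) (hL : 0 ≤ L)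
    (hμ0 : μ0 ∈ simplex 𝒳) {π : ℕ → 𝒳 → 𝒰 → ℝ} (hπ : IsPolicy π) {G G' : ℕ → 𝒳 → ℝ}
    (hG : ∀ t, G t ∈ subProb 𝒳) (hG' : ∀ t, G' t ∈ subProb 𝒳) {δ : ℝ} {t : ℕ}
    (hδ : ∀ s < t, l1dist (G s) (G' s) ≤ δ) :
    l1dist (stateLaw P μ0 G π t) (stateLaw P μ0 G' π t) ≤ t * (L * δ) := by
  induction t with
  | zero => simp [stateLaw, l1dist_self]
  | succ t ih =>
    calc l1dist (stateLaw P μ0 G π (t + 1)) (stateLaw P μ0 G' π (t + 1))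
        ≤ l1dist (stateLaw P μ0 G π t) (stateLaw P μ0 G' π t) + L * l1dist (G t) (G' t) :=
          l1dist_mixture_policyKernel_le hP hPLip (hπ t) (hG t) (hG' t)
            (stateLaw_mem_simplex hP hμ0 hπ hG' t)
      _ ≤ t * (L * δ) + L * δ := by
          gcongr
          exacts [ih fun s hs => hδ s (hs.trans t.lt_succ_self), hδ t t.lt_succ_self]
      _ = (t + 1 : ℕ) * (L * δ) := by push_cast; ring

lemma abs_Jmf_sub_Jmf_le {T : ℕ} {R δ : ℝ} (hP : IsKernel P) (hPLip : KernelLipschitz P L)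
    (hL : 0 ≤ L) (hrLip : RewardLipschitz r Lr) (hLr : 0 ≤ Lr)
    (hR : ∀ x u, ∀ ν ∈ subProb 𝒳, |r x u ν| ≤ R) (hμ0 : μ0 ∈ simplex 𝒳) {π : ℕ → 𝒳 → 𝒰 → ℝ}
    (hπ : IsPolicy π) {G G' : ℕ → 𝒳 → ℝ} (hG : ∀ t, G t ∈ subProb 𝒳)
    (hG' : ∀ t, G' t ∈ subProb 𝒳) (hδ : ∀ t < T, l1dist (G t) (G' t) ≤ δ) :
    |Jmf T r P μ0 G π - Jmf T r P μ0 G' π| ≤ T * (R * (T * L) + Lr) * δ := by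
  let f (G : ℕ → 𝒳 → ℝ) (t : ℕ) (x : 𝒳) : ℝ := π t x ⬝ᵥ fun u => r x u (G t)
  have stage (t : ℕ) (ht : t ∈ Finset.range T) :
      |stateLaw P μ0 G π t ⬝ᵥ f G t - stateLaw P μ0 G' π t ⬝ᵥ f G' t| ≤
        (R * (T * L) + Lr) * δ := by
    have htT : t < T := Finset.mem_range.1 ht
    have hδ0 : 0 ≤ δ := (l1dist_nonneg _ _).trans (hδ t htT)
    have reward_le (x : 𝒳) : |f G t x| ≤ R :=
      abs_dotProduct_le_of_mem_simplex (hπ t x) fun u => hR x u _ (hG t)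
    have hR0 : 0 ≤ R := (abs_nonneg _).trans <|
      abs_dotProduct_le_of_mem_simplex (stateLaw_mem_simplex hP hμ0 hπ hG t) reward_le
    have reward_sub_le (x : 𝒳) : |f G t x - f G' t x| ≤ Lr * δ := by
      rw [← dotProduct_sub]
      exact abs_dotProduct_le_of_mem_simplex (hπ t x) fun u =>
        (hrLip x u _ _ (hG t) (hG' t)).trans (mul_le_mul_of_nonneg_left (hδ t htT) hLr)
    calc |stateLaw P μ0 G π t ⬝ᵥ f G t - stateLaw P μ0 G' π t ⬝ᵥ f G' t|
        ≤ R * l1dist (stateLaw P μ0 G π t) (stateLaw P μ0 G' π t) + Lr * δ :=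
          abs_dotProduct_sub_dotProduct_le (stateLaw_mem_simplex hP hμ0 hπ hG' t) reward_le
            reward_sub_le
      _ ≤ R * (t * (L * δ)) + Lr * δ := by
          gcongr
          exact l1dist_stateLaw_le hP hPLip hL hμ0 hπ hG hG' fun s hs => hδ s (hs.trans htT)
      _ ≤ R * (T * (L * δ)) + Lr * δ := by gcongr
      _ = (R * (T * L) + Lr) * δ := by ring
  calc |Jmf T r P μ0 G π - Jmf T r P μ0 G' π|
      = |∑ t ∈ Finset.range T,
          (stateLaw P μ0 G π t ⬝ᵥ f G t - stateLaw P μ0 G' π t ⬝ᵥ f G' t)| := by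
        rw [Finset.sum_sub_distrib]; rfl
    _ ≤ ∑ _t ∈ Finset.range T, (R * (T * L) + Lr) * δ :=
        (Finset.abs_sum_le_sum_abs _ _).trans (Finset.sum_le_sum stage)
    _ = T * (R * (T * L) + Lr) * δ := by
        rw [Finset.sum_const, Finset.card_range, nsmul_eq_mul, mul_assoc]

end Agent

section EquivalenceClasses

/-- The equivalence class `Ĩ_m = (m/M, (m+1)/M]` of the representative `rep M m`; the point `0` is
adjoined to the first class, so that the classes partition `[0,1]`. -/
def eqClass (M : ℕ) (m : Fin M) : Set ℝ :=
  Set.Ioc (((m : ℕ) : ℝ) / M) ((((m : ℕ) : ℝ) + 1) / M) ∪ {α | (m : ℕ) = 0 ∧ α = 0}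

variable {M : ℕ}

lemma rep_mem_eqClass (m : Fin M) : rep M m ∈ eqClass M m := by
  have hM : (0 : ℝ) < M := by exact_mod_cast m.pos
  exact Or.inl ⟨by unfold rep; gcongr; exact lt_add_one _, le_rfl⟩

lemma eqClass_subset_Icc_div (m : Fin M) :
    eqClass M m ⊆ Set.Icc (((m : ℕ) : ℝ) / M) ((((m : ℕ) : ℝ) + 1) / M) := by
  rintro α (hα | ⟨hm, rfl⟩)
  · exact Set.Ioc_subset_Icc_self hα
  · simp [hm]

lemma eqClass_subset_Icc (m : Fin M) : eqClass M m ⊆ Set.Icc 0 1 := by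
  have hM : (0 : ℝ) < M := by exact_mod_cast m.pos
  refine (eqClass_subset_Icc_div m).trans (Set.Icc_subset_Icc (by positivity) ?_)
  rw [div_le_one hM]
  exact_mod_cast m.isLt

lemma abs_sub_rep_le {m : Fin M} {α : ℝ} (hα : α ∈ eqClass M m) : |α - rep M m| ≤ 1 / M := by
  refine (abs_sub_le_of_le_of_le (eqClass_subset_Icc_div m hα).1 (eqClass_subset_Icc_div m hα).2
    (eqClass_subset_Icc_div m (rep_mem_eqClass m)).1
    (eqClass_subset_Icc_div m (rep_mem_eqClass m)).2).trans_eq ?_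
  ring

lemma exists_mem_eqClass (hM : 0 < M) {α : ℝ} (hα : α ∈ Set.Icc (0 : ℝ) 1) :
    ∃ m : Fin M, α ∈ eqClass M m := by
  have hM' : (0 : ℝ) < M := by exact_mod_cast hM
  rcases hα.1.eq_or_lt with rfl | hα0
  · exact ⟨⟨0, hM⟩, Or.inr ⟨rfl, rfl⟩⟩
  · obtain ⟨k, hk⟩ : ∃ k, ⌈α * M⌉₊ = k + 1 :=
      Nat.exists_eq_add_one.2 (Nat.ceil_pos.2 (by positivity))
    have hkM : k < M := by
      rw [← Nat.succ_le_iff, Nat.succ_eq_add_one, ← hk, Nat.ceil_le]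
      exact mul_le_of_le_one_left hM'.le hα.2
    obtain ⟨hlt, hle⟩ := (Nat.ceil_eq_iff k.succ_ne_zero).1 hk
    refine ⟨⟨k, hkM⟩, Or.inl ⟨(div_lt_iff₀ hM').2 ?_, (le_div_iff₀ hM').2 ?_⟩⟩
    · simpa using hlt
    · simpa using hle

lemma isPolicy_of_eqOn_eqClass [Fintype 𝒰] {πm : Fin M → ℕ → 𝒳 → 𝒰 → ℝ}
    {πe : ℝ → ℕ → 𝒳 → 𝒰 → ℝ} (hπm : ∀ m, IsPolicy (πm m))
    (hπe : ∀ m, ∀ α ∈ eqClass M m, πe α = πm m) (hM : 0 < M) {α : ℝ}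
    (hα : α ∈ Set.Icc (0 : ℝ) 1) : IsPolicy (πe α) := by
  obtain ⟨m, hm⟩ := exists_mem_eqClass hM hα
  exact hπe m α hm ▸ hπm m

variable {E : Type*} [NormedAddCommGroup E] [NormedSpace ℝ E]

lemma setIntegral_Ioc_zero_one_eq_sum (hM : 0 < M) {f : ℝ → E}
    (hf : IntegrableOn f (Set.Ioc 0 1)) :
    ∫ β in Set.Ioc (0 : ℝ) 1, f β =
      ∑ n : Fin M, ∫ β in Set.Ioc (((n : ℕ) : ℝ) / M) ((((n : ℕ) : ℝ) + 1) / M), f β := by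
  have hM' : (0 : ℝ) < M := by exact_mod_cast hM
  have mono (k : ℕ) : (k : ℝ) / M ≤ ((k + 1 : ℕ) : ℝ) / M := by gcongr; exact k.le_succ
  have integrable (k : ℕ) (hk : k < M) :
      IntervalIntegrable f volume ((k : ℝ) / M) (((k + 1 : ℕ) : ℝ) / M) := by
    rw [intervalIntegrable_iff_integrableOn_Ioc_of_le (mono k)]
    refine hf.mono_set (Set.Ioc_subset_Ioc (by positivity) ?_)
    rw [div_le_one hM']
    exact_mod_cast hk
  have adjacent := intervalIntegral.sum_integral_adjacent_intervals integrable
  rw [Nat.cast_zero, zero_div, div_self hM'.ne', intervalIntegral.integral_of_le zero_le_one]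
    at adjacent
  rw [← adjacent, ← Fin.sum_univ_eq_sum_range
    fun k => ∫ β in ((k : ℝ) / M)..(((k + 1 : ℕ) : ℝ) / M), f β]
  refine Finset.sum_congr rfl fun n _ => ?_
  rw [intervalIntegral.integral_of_le (mono n), Nat.cast_add_one]

lemma norm_setIntegral_sub_average_le [CompleteSpace E] (hM : 0 < M) {f : ℝ → E}
    (hf : IntegrableOn f (Set.Ioc 0 1)) {c : Fin M → E} {d : ℝ}
    (hd : ∀ n, ∀ β ∈ eqClass M n, ‖f β - c n‖ ≤ d) :
    ‖(∫ β in Set.Ioc (0 : ℝ) 1, f β) - (M : ℝ)⁻¹ • ∑ n, c n‖ ≤ d := by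
  let I (n : Fin M) : Set ℝ := Set.Ioc (((n : ℕ) : ℝ) / M) ((((n : ℕ) : ℝ) + 1) / M)
  have volume_I (n : Fin M) : volume.real (I n) = (M : ℝ)⁻¹ := by
    rw [Real.volume_real_Ioc_of_le (by gcongr; exact (lt_add_one _).le)]
    ring
  have block (n : Fin M) : ‖(∫ β in I n, f β) - (M : ℝ)⁻¹ • c n‖ ≤ d * (M : ℝ)⁻¹ := by
    have I_subset : I n ⊆ Set.Ioc 0 1 := fun β hβ =>
      ⟨lt_of_le_of_lt (by positivity) hβ.1, (eqClass_subset_Icc n (Or.inl hβ)).2⟩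
    rw [← volume_I n, ← setIntegral_const,
      ← integral_sub (hf.mono_set I_subset) (integrable_const _)]
    exact norm_setIntegral_le_of_norm_le_const measure_Ioc_lt_top fun β hβ =>
      hd n β (Or.inl hβ)
  rw [setIntegral_Ioc_zero_one_eq_sum hM hf, Finset.smul_sum, ← Finset.sum_sub_distrib]
  calc ‖∑ n, ((∫ β in I n, f β) - (M : ℝ)⁻¹ • c n)‖ ≤ ∑ _n : Fin M, d * (M : ℝ)⁻¹ :=
        norm_sum_le_of_le _ fun n _ => block n
    _ = d := by
        rw [Finset.sum_const, Finset.card_univ, Fintype.card_fin, nsmul_eq_mul,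
          mul_comm d, mul_inv_cancel_left₀ (Nat.cast_ne_zero.2 hM.ne')]

end EquivalenceClasses

section NeighborhoodMeanField

/-- A directed graphon: measurable and `[0,1]`-valued, but possibly asymmetric. -/
def IsDigraphon (W : ℝ → ℝ → ℝ) : Prop :=
  Measurable (Function.uncurry W) ∧ ∀ a b, W a b ∈ Set.Icc (0 : ℝ) 1

variable [Fintype 𝒳] {M : ℕ} {W : ℝ → ℝ → ℝ} {LW : ℝ} {ν : ℝ → 𝒳 → ℝ} {ν' : Fin M → 𝒳 → ℝ}

lemma IsGraphon.isDigraphon (hW : IsGraphon W) : IsDigraphon W :=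
  ⟨hW.1, hW.2.2⟩

lemma GraphonLipschitz.nonneg (hWLip : GraphonLipschitz W LW) : 0 ≤ LW := by
  simpa using (abs_nonneg _).trans (hWLip 1 0 0 0 (by simp) (by simp) (by simp) (by simp))

lemma IsDigraphon.integrableOn_mul (hW : IsDigraphon W) (hνm : ∀ x, Measurable fun β => ν β x)
    (hν : ∀ β ∈ Set.Ioc (0 : ℝ) 1, ν β ∈ simplex 𝒳) (α : ℝ) (x : 𝒳) :
    IntegrableOn (fun β => W α β * ν β x) (Set.Ioc 0 1) := by
  have hWα : Measurable (W α) := hW.1.comp measurable_prodMk_left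
  refine Measure.integrableOn_of_bounded (M := 1) measure_Ioc_lt_top.ne
    (hWα.mul (hνm x)).aestronglyMeasurable (ae_restrict_of_forall_mem measurableSet_Ioc ?_)
  intro β hβ
  rw [Real.norm_eq_abs, abs_of_nonneg (mul_nonneg (hW.2 α β).1 ((hν β hβ).1 x))]
  exact mul_le_one₀ (hW.2 α β).2 ((hν β hβ).1 x) (le_one_of_mem_simplex (hν β hβ) x)

lemma IsDigraphon.nbhd_mem_subProb (hW : IsDigraphon W) (hνm : ∀ x, Measurable fun β => ν β x)
    (hν : ∀ β ∈ Set.Ioc (0 : ℝ) 1, ν β ∈ simplex 𝒳) (α : ℝ) : nbhd W ν α ∈ subProb 𝒳 := by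
  refine ⟨fun x => setIntegral_nonneg measurableSet_Ioc fun β hβ =>
    mul_nonneg (hW.2 α β).1 ((hν β hβ).1 x), ?_⟩
  have mass_le (β : ℝ) (hβ : β ∈ Set.Ioc (0 : ℝ) 1) : ‖∑ x, W α β * ν β x‖ ≤ 1 := by
    rw [← Finset.mul_sum, (hν β hβ).2, mul_one, Real.norm_eq_abs, abs_of_nonneg (hW.2 α β).1]
    exact (hW.2 α β).2
  calc ∑ x, nbhd W ν α x = ∫ β in Set.Ioc (0 : ℝ) 1, ∑ x, W α β * ν β x :=
        (integral_finsetSum _ fun x _ => hW.integrableOn_mul hνm hν α x).symm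
    _ ≤ ‖∫ β in Set.Ioc (0 : ℝ) 1, ∑ x, W α β * ν β x‖ := Real.le_norm_self _
    _ ≤ 1 * volume.real (Set.Ioc (0 : ℝ) 1) :=
        norm_setIntegral_le_of_norm_le_const measure_Ioc_lt_top mass_le
    _ = 1 := by simp

lemma IsDigraphon.approxNbhd_mem_subProb (hW : IsDigraphon W) (hν' : ∀ n, ν' n ∈ simplex 𝒳)
    (m : Fin M) : approxNbhd W ν' m ∈ subProb 𝒳 := by
  have hM : (0 : ℝ) < M := by exact_mod_cast m.pos
  refine ⟨fun x => mul_nonneg (by positivity) (Finset.sum_nonneg fun n _ =>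
    mul_nonneg (hW.2 _ _).1 ((hν' n).1 x)), ?_⟩
  calc ∑ x, approxNbhd W ν' m x = (M : ℝ)⁻¹ * ∑ n, W (rep M m) (rep M n) := by
        simp only [approxNbhd]
        rw [← Finset.mul_sum, Finset.sum_comm]
        simp only [← Finset.mul_sum, (hν' _).2, mul_one]
    _ ≤ (M : ℝ)⁻¹ * ∑ _n : Fin M, 1 := by
        gcongr with n
        exact (hW.2 _ _).2
    _ = 1 := by simp [hM.ne']

lemma IsDigraphon.l1dist_nbhd_approxNbhd_le (hW : IsDigraphon W) (hWLip : GraphonLipschitz W LW)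
    (hνm : ∀ x, Measurable fun β => ν β x) (hν : ∀ β ∈ Set.Ioc (0 : ℝ) 1, ν β ∈ simplex 𝒳)
    (hν' : ∀ n, ν' n ∈ simplex 𝒳) {d : ℝ} (hd : ∀ n, ∀ β ∈ eqClass M n, l1dist (ν β) (ν' n) ≤ d)
    {m : Fin M} {α : ℝ} (hα : α ∈ eqClass M m) :
    l1dist (nbhd W ν α) (approxNbhd W ν' m) ≤ 2 * LW / M + d := by
  let f (β : ℝ) : PiLp 1 fun _ : 𝒳 => ℝ := WithLp.toLp 1 fun x => W α β * ν β x
  let c (n : Fin M) : PiLp 1 fun _ : 𝒳 => ℝ :=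
    WithLp.toLp 1 fun x => W (rep M m) (rep M n) * ν' n x
  have integrable : IntegrableOn f (Set.Ioc 0 1) :=
    Integrable.of_eval_piLp fun x => hW.integrableOn_mul hνm hν α x
  have class_le (n : Fin M) (β : ℝ) (hβ : β ∈ eqClass M n) : ‖f β - c n‖ ≤ 2 * LW / M + d := by
    have lip : |W α β - W (rep M m) (rep M n)| ≤ 2 * LW / M :=
      calc |W α β - W (rep M m) (rep M n)| ≤ LW * (|α - rep M m| + |β - rep M n|) :=
            hWLip _ _ _ _ (eqClass_subset_Icc m hα) (eqClass_subset_Icc n hβ)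
              (eqClass_subset_Icc m (rep_mem_eqClass m)) (eqClass_subset_Icc n (rep_mem_eqClass n))
        _ ≤ LW * (1 / M + 1 / M) :=
            mul_le_mul_of_nonneg_left (add_le_add (abs_sub_rep_le hα) (abs_sub_rep_le hβ))
              hWLip.nonneg
        _ = 2 * LW / M := by ring
    rw [← WithLp.toLp_sub, ← l1dist_eq_norm_toLp_sub]
    exact (l1dist_mul_le (hW.2 α β) (hν' n)).trans (add_le_add lip (hd n β hβ))
  have nbhd_eq : WithLp.toLp 1 (nbhd W ν α) = ∫ β in Set.Ioc (0 : ℝ) 1, f β := by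
    ext x
    exact (eval_integral_piLp (f := f) (fun x => hW.integrableOn_mul hνm hν α x) x).symm
  have approxNbhd_eq : WithLp.toLp 1 (approxNbhd W ν' m) = (M : ℝ)⁻¹ • ∑ n, c n := by
    ext x
    simp [approxNbhd, c]
  rw [l1dist_eq_norm_toLp_sub, WithLp.toLp_sub, nbhd_eq, approxNbhd_eq]
  exact norm_setIntegral_sub_average_le m.pos integrable class_le

end NeighborhoodMeanField

section MeanField

variable [Fintype 𝒳] [Fintype 𝒰] {P : 𝒳 → 𝒰 → (𝒳 → ℝ) → 𝒳 → ℝ} {μ0 : 𝒳 → ℝ} {W : ℝ → ℝ → ℝ}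
  {πe : ℝ → ℕ → 𝒳 → 𝒰 → ℝ} {μ : ℕ → ℝ → 𝒳 → ℝ} {M : ℕ} {πm : Fin M → ℕ → 𝒳 → 𝒰 → ℝ}
  {LP LW : ℝ}

lemma IsMeanFieldOf.succ_eq_mixture (hμ : IsMeanFieldOf W P μ0 πe μ) (t : ℕ) {α : ℝ}
    (hα : α ∈ Set.Icc (0 : ℝ) 1) :
    μ (t + 1) α = mixture (μ t α) (policyKernel P (πe α t) (nbhd W (μ t) α)) :=
  funext (hμ.2.2 t α hα)

lemma approxMF_succ_eq_mixture (t : ℕ) (m : Fin M) :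
    approxMF W P μ0 πm (t + 1) m = mixture (approxMF W P μ0 πm t m)
      (policyKernel P (πm m t) (approxNbhd W (approxMF W P μ0 πm t) m)) :=
  rfl

lemma IsMeanFieldOf.mem_simplex (hμ : IsMeanFieldOf W P μ0 πe μ) (hW : IsDigraphon W)
    (hP : IsKernel P) (hμ0 : μ0 ∈ simplex 𝒳) (hπe : ∀ α ∈ Set.Icc (0 : ℝ) 1, IsPolicy (πe α))
    (t : ℕ) {α : ℝ} (hα : α ∈ Set.Icc (0 : ℝ) 1) : μ t α ∈ simplex 𝒳 := by
  induction t generalizing α with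
  | zero => rwa [hμ.2.1 α hα]
  | succ t ih =>
    rw [hμ.succ_eq_mixture t hα]
    exact mixture_mem_simplex (ih hα) <| policyKernel_mem_simplex hP (hπe α hα t) <|
      hW.nbhd_mem_subProb (hμ.1 t) (fun β hβ => ih (Set.Ioc_subset_Icc_self hβ)) α

lemma IsMeanFieldOf.nbhd_mem_subProb (hμ : IsMeanFieldOf W P μ0 πe μ) (hW : IsDigraphon W)
    (hP : IsKernel P) (hμ0 : μ0 ∈ simplex 𝒳) (hπe : ∀ α ∈ Set.Icc (0 : ℝ) 1, IsPolicy (πe α))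
    (t : ℕ) (α : ℝ) : nbhd W (μ t) α ∈ subProb 𝒳 :=
  hW.nbhd_mem_subProb (hμ.1 t)
    (fun _ hβ => hμ.mem_simplex hW hP hμ0 hπe t (Set.Ioc_subset_Icc_self hβ)) α

lemma approxMF_mem_simplex (hW : IsDigraphon W) (hP : IsKernel P) (hμ0 : μ0 ∈ simplex 𝒳)
    (hπm : ∀ m, IsPolicy (πm m)) (t : ℕ) (m : Fin M) : approxMF W P μ0 πm t m ∈ simplex 𝒳 := by
  induction t generalizing m with
  | zero => exact hμ0
  | succ t ih =>
    exact mixture_mem_simplex (ih m)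
      (policyKernel_mem_simplex hP (hπm m t) (hW.approxNbhd_mem_subProb ih m))

lemma IsMeanFieldOf.l1dist_nbhd_approxNbhd_le (hμ : IsMeanFieldOf W P μ0 πe μ)
    (hW : IsDigraphon W) (hWLip : GraphonLipschitz W LW) (hP : IsKernel P) (hμ0 : μ0 ∈ simplex 𝒳)
    (hπe : ∀ α ∈ Set.Icc (0 : ℝ) 1, IsPolicy (πe α)) (hπm : ∀ m, IsPolicy (πm m)) {t : ℕ} {d : ℝ}
    (hd : ∀ n, ∀ β ∈ eqClass M n, 2 * LW / M + l1dist (μ t β) (approxMF W P μ0 πm t n) ≤ d)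
    {m : Fin M} {α : ℝ} (hα : α ∈ eqClass M m) :
    l1dist (nbhd W (μ t) α) (approxNbhd W (approxMF W P μ0 πm t) m) ≤ d :=
  (hW.l1dist_nbhd_approxNbhd_le hWLip (hμ.1 t)
    (fun _ hβ => hμ.mem_simplex hW hP hμ0 hπe t (Set.Ioc_subset_Icc_self hβ))
    (approxMF_mem_simplex hW hP hμ0 hπm t)
    (fun n β hβ => le_sub_iff_add_le'.2 (hd n β hβ)) hα).trans_eq (add_sub_cancel _ _)

lemma add_l1dist_approxMF_le (hW : IsDigraphon W) (hWLip : GraphonLipschitz W LW)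
    (hP : IsKernel P) (hPLip : KernelLipschitz P LP) (hLP : 0 ≤ LP) (hμ0 : μ0 ∈ simplex 𝒳)
    (hπm : ∀ m, IsPolicy (πm m)) (hπe : ∀ m, ∀ α ∈ eqClass M m, πe α = πm m)
    (hμ : IsMeanFieldOf W P μ0 πe μ) (t : ℕ) {m : Fin M} {α : ℝ} (hα : α ∈ eqClass M m) :
    2 * LW / M + l1dist (μ t α) (approxMF W P μ0 πm t m) ≤ 2 * LW / M * (1 + LP) ^ t := by
  have hπe' (β : ℝ) (hβ : β ∈ Set.Icc (0 : ℝ) 1) : IsPolicy (πe β) :=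
    isPolicy_of_eqOn_eqClass hπm hπe m.pos hβ
  set c : ℝ := 2 * LW / M
  induction t generalizing m α with
  | zero => simp [approxMF, hμ.2.1 α (eqClass_subset_Icc m hα), l1dist_self]
  | succ t ih =>
    set G : 𝒳 → ℝ := nbhd W (μ t) α
    set G' : 𝒳 → ℝ := approxNbhd W (approxMF W P μ0 πm t) m
    have nbhd_le : l1dist G G' ≤ c * (1 + LP) ^ t :=
      hμ.l1dist_nbhd_approxNbhd_le hW hWLip hP hμ0 hπe' hπm (fun _ _ hβ => ih hβ) hα
    have law_le : l1dist (μ (t + 1) α) (approxMF W P μ0 πm (t + 1) m) ≤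
        l1dist (μ t α) (approxMF W P μ0 πm t m) + LP * l1dist G G' := by
      rw [hμ.succ_eq_mixture t (eqClass_subset_Icc m hα), approxMF_succ_eq_mixture, hπe m α hα]
      exact l1dist_mixture_policyKernel_le hP hPLip (hπm m t)
        (hμ.nbhd_mem_subProb hW hP hμ0 hπe' t α)
        (hW.approxNbhd_mem_subProb (approxMF_mem_simplex hW hP hμ0 hπm t) m)
        (approxMF_mem_simplex hW hP hμ0 hπm t m)
    calc c + l1dist (μ (t + 1) α) (approxMF W P μ0 πm (t + 1) m)
        ≤ (c + l1dist (μ t α) (approxMF W P μ0 πm t m)) + LP * l1dist G G' := by linarith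
      _ ≤ c * (1 + LP) ^ t + LP * (c * (1 + LP) ^ t) := by
          gcongr
          exact ih hα
      _ = c * (1 + LP) ^ (t + 1) := by ring

lemma abs_Jmf_nbhd_sub_Jmf_approxNbhd_le {T : ℕ} {r : 𝒳 → 𝒰 → (𝒳 → ℝ) → ℝ} {Lr R : ℝ}
    (hW : IsDigraphon W) (hWLip : GraphonLipschitz W LW) (hP : IsKernel P)
    (hPLip : KernelLipschitz P LP) (hLP : 0 ≤ LP) (hrLip : RewardLipschitz r Lr) (hLr : 0 ≤ Lr)
    (hR : ∀ x u, ∀ ν ∈ subProb 𝒳, |r x u ν| ≤ R) (hμ0 : μ0 ∈ simplex 𝒳)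
    (hπm : ∀ m, IsPolicy (πm m)) (hπe : ∀ m, ∀ α ∈ eqClass M m, πe α = πm m)
    (hμ : IsMeanFieldOf W P μ0 πe μ) {m : Fin M} {α : ℝ} (hα : α ∈ eqClass M m)
    {π : ℕ → 𝒳 → 𝒰 → ℝ} (hπ : IsPolicy π) :
    |Jmf T r P μ0 (fun t => nbhd W (μ t) α) π -
        Jmf T r P μ0 (fun t => approxNbhd W (approxMF W P μ0 πm t) m) π| ≤
      T * (R * (T * LP) + Lr) * (2 * LW / M * (1 + LP) ^ T) := by
  have hπe' (β : ℝ) (hβ : β ∈ Set.Icc (0 : ℝ) 1) : IsPolicy (πe β) :=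
    isPolicy_of_eqOn_eqClass hπm hπe m.pos hβ
  have hLW : 0 ≤ LW := hWLip.nonneg
  refine abs_Jmf_sub_Jmf_le hP hPLip hLP hrLip hLr hR hμ0 hπ
    (fun t => hμ.nbhd_mem_subProb hW hP hμ0 hπe' t α)
    (fun t => hW.approxNbhd_mem_subProb (approxMF_mem_simplex hW hP hμ0 hπm t) m) fun t ht => ?_
  calc l1dist (nbhd W (μ t) α) (approxNbhd W (approxMF W P μ0 πm t) m)
      ≤ 2 * LW / M * (1 + LP) ^ t :=
        hμ.l1dist_nbhd_approxNbhd_le hW hWLip hP hμ0 hπe' hπm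
          (fun _ _ hβ => add_l1dist_approxMF_le hW hWLip hP hPLip hLP hμ0 hπm hπe hμ t hβ) hα
    _ ≤ 2 * LW / M * (1 + LP) ^ T := by
        gcongr
        exact le_add_of_nonneg_right hLP

end MeanField

theorem eq_class_approximate_optimality_general
    {𝒳 𝒰 : Type*} [Fintype 𝒳] [Fintype 𝒰]
    (T : ℕ) (μ0 : 𝒳 → ℝ) (hμ0 : μ0 ∈ simplex 𝒳)
    (P : 𝒳 → 𝒰 → (𝒳 → ℝ) → 𝒳 → ℝ) (hP : IsKernel P)
    (r : 𝒳 → 𝒰 → (𝒳 → ℝ) → ℝ)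
    (Lr LP LW : ℝ) (hrLip : RewardLipschitz r Lr) (hPLip : KernelLipschitz P LP)
    (W : ℝ → ℝ → ℝ) (hW : IsDigraphon W) (hWLip : GraphonLipschitz W LW) :
    ∃ C : ℝ, ∀ M > 0, ∀ πm : Fin M → ℕ → 𝒳 → 𝒰 → ℝ,
      IsEqClassSolution T W P r μ0 πm →
      ∀ πe : ℝ → ℕ → 𝒳 → 𝒰 → ℝ, (∀ m, ∀ α ∈ eqClass M m, πe α = πm m) →
        ∀ μbar : ℕ → ℝ → 𝒳 → ℝ, IsMeanFieldOf W P μ0 πe μbar →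
        ∀ α ∈ Set.Icc (0 : ℝ) 1, ∀ π' : ℕ → 𝒳 → 𝒰 → ℝ, IsPolicy π' →
          Jmf T r P μ0 (fun t => nbhd W (μbar t) α) π' -
            Jmf T r P μ0 (fun t => nbhd W (μbar t) α) (πe α) ≤ C / M := by
  replace hPLip : KernelLipschitz P |LP| := hPLip.mono (le_abs_self LP)
  replace hrLip : RewardLipschitz r |Lr| := hrLip.mono (le_abs_self Lr)
  obtain ⟨R, hR⟩ := hrLip.exists_bound (abs_nonneg Lr)
  refine ⟨2 * (T * (R * (T * |LP|) + |Lr|) * (2 * LW * (1 + |LP|) ^ T)), ?_⟩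
  rintro M hM πm ⟨hπm, hopt⟩ πe hπe μbar hμ α hα π' hπ'
  obtain ⟨m, hm⟩ := exists_mem_eqClass hM hα
  have gap {π : ℕ → 𝒳 → 𝒰 → ℝ} (hπ : IsPolicy π) :=
    abs_le.1 <| abs_Jmf_nbhd_sub_Jmf_approxNbhd_le (T := T) hW hWLip hP hPLip (abs_nonneg LP)
      hrLip (abs_nonneg Lr) hR hμ0 hπm hπe hμ hm hπ
  rw [hπe m α hm]
  calc Jmf T r P μ0 (fun t => nbhd W (μbar t) α) π' -
        Jmf T r P μ0 (fun t => nbhd W (μbar t) α) (πm m)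
      ≤ 2 * (T * (R * (T * |LP|) + |Lr|) * (2 * LW / M * (1 + |LP|) ^ T)) := by
        linarith [(gap hπ').2, hopt m π' hπ', (gap (hπm m)).1]
    _ = 2 * (T * (R * (T * |LP|) + |Lr|) * (2 * LW * (1 + |LP|) ^ T)) / M := by ring

/-- under Assumption (Lip), for any ε > 0 there exists M' ∈ ℕ such that
for all M > M', any solution (𝛑, 𝛍) of the M equivalence classes method satisfies
sup_{α∈[0,1]} max_{π∈Π} (J^𝛍̄_α(π) − J^𝛍̄_α(π^α)) < ε, where 𝛍̄ = Ψ(𝛑) is the exact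
mean field ensemble generated by the block-constant policy ensemble 𝛑. -/
theorem eq_class_approximate_optimality
    {𝒳 𝒰 : Type*} [Fintype 𝒳] [Nonempty 𝒳] [Fintype 𝒰] [Nonempty 𝒰]
    (T : ℕ) (μ0 : 𝒳 → ℝ) (hμ0 : μ0 ∈ simplex 𝒳)
    (P : 𝒳 → 𝒰 → (𝒳 → ℝ) → 𝒳 → ℝ) (hP : IsKernel P)
    (r : 𝒳 → 𝒰 → (𝒳 → ℝ) → ℝ)
    (Lr LP LW : ℝ) (hrLip : RewardLipschitz r Lr) (hPLip : KernelLipschitz P LP)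
    (W : ℝ → ℝ → ℝ) (hW : IsGraphon W) (hWLip : GraphonLipschitz W LW)
    (ε : ℝ) (hε : 0 < ε) :
    ∃ M' : ℕ, ∀ M > M', ∀ πm : Fin M → ℕ → 𝒳 → 𝒰 → ℝ,
      IsEqClassSolution T W P r μ0 πm →
      ∀ πe : ℝ → ℕ → 𝒳 → 𝒰 → ℝ,
        (∀ (m : Fin M) (α : ℝ),
          α ∈ Set.Ioc (((m : ℕ) : ℝ) / M) ((((m : ℕ) : ℝ) + 1) / M) → πe α = πm m) →
        (∀ m : Fin M, (m : ℕ) = 0 → πe 0 = πm m) →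
        ∀ μbar : ℕ → ℝ → 𝒳 → ℝ, IsMeanFieldOf W P μ0 πe μbar →
        ∀ α ∈ Set.Icc (0:ℝ) 1, ∀ π' : ℕ → 𝒳 → 𝒰 → ℝ, IsPolicy π' →
          Jmf T r P μ0 (fun t => nbhd W (μbar t) α) π' -
            Jmf T r P μ0 (fun t => nbhd W (μbar t) α) (πe α) < ε := by
  obtain ⟨C, hC⟩ := eq_class_approximate_optimality_general T μ0 hμ0 P hP r Lr LP LW hrLip hPLip W
    hW.isDigraphon hWLip
  obtain ⟨M', hM'⟩ :=
    ((tendsto_const_div_atTop_nhds_zero_nat C).eventually_lt_const hε).exists_forall_of_atTop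
  refine ⟨M', fun M hM πm hsol πe hblock hzero μbar hμ α hα π' hπ' => ?_⟩
  have hπe (m : Fin M) (α : ℝ) (hα : α ∈ eqClass M m) : πe α = πm m :=
    hα.elim (hblock m α) fun h => h.2 ▸ hzero m h.1
  exact (hC M (by lia) πm hsol πe hπe μbar hμ α hα π' hπ').trans_lt (hM' M hM.le)

end GMFG
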